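/- arXiv:math/9901156 — 2 statements merged into one kernel-verified Lean document; each statement's English description precedes it below -/
import Mathlib

section
/- Let p be a prime, let 1 ≤ r ≤ s be integers, set k = s − r, and let d = diag(1, p^k, p^{3k}, p^{2k}) ∈ GL₄(ℚ_p). For t ≥ 1 let I_t be the level-p^t Iwahori subgroup of Sp₄(ℤ_p). Then, as subsets of M₄(ℚ_p), {d⁻¹·g·d : g ∈ I_s} ∩ I_r = {d⁻¹·g·d : g ∈ I_r} ∩ I_r. -/
open scoped Pointwise

/-- The standard symplectic matrix `J = (0, 1₂; −1₂, 0)` in `M₄(R)`. -/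
def J4 (R : Type*) [CommRing R] : Matrix (Fin 4) (Fin 4) R :=
  !![0, 0, 1, 0;
     0, 0, 0, 1;
     -1, 0, 0, 0;
     0, -1, 0, 0]

/-- The six sub-Borel matrix positions `(2,1),(3,1),(3,2),(3,4),(4,1),(4,2)`
(written with 0-based indices). -/
def subBorelPos : Set (Fin 4 × Fin 4) :=
  {(1, 0), (2, 0), (2, 1), (2, 3), (3, 0), (3, 1)}

/-- The level-`p^t` Iwahori subgroup of `Sp₄(ℤ_p)`, viewed as a subset of
`M₄(ℚ_p)`: symplectic matrices with `ℤ_p`-entries whose entries at the six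
sub-Borel positions lie in `p^t·ℤ_p`. -/
def Iwahori (p : ℕ) [Fact p.Prime] (t : ℕ) : Set (Matrix (Fin 4) (Fin 4) ℚ_[p]) :=
  {g | g.transpose * J4 ℚ_[p] * g = J4 ℚ_[p] ∧
    (∀ i j, ∃ c : ℤ_[p], (c : ℚ_[p]) = g i j) ∧
    ∀ q ∈ subBorelPos, ∃ c : ℤ_[p], (((p : ℤ_[p]) ^ t * c : ℤ_[p]) : ℚ_[p]) = g q.1 q.2}

/-- The diagonal matrix `d = diag(1, p^k, p^{3k}, p^{2k})` in `GL₄(ℚ_p)`. -/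
noncomputable def dMat (p : ℕ) [Fact p.Prime] (k : ℕ) : Matrix (Fin 4) (Fin 4) ℚ_[p] :=
  Matrix.diagonal ![1, (p : ℚ_[p]) ^ k, (p : ℚ_[p]) ^ (3 * k), (p : ℚ_[p]) ^ (2 * k)]

/-!
Weight the four coordinates by `w = (0, 1, 3, 2)`, so that `d` scales coordinate `i` by
`p ^ (k * wᵢ)`. The sub-Borel positions are exactly the `(i, j)` with `wⱼ < wᵢ`, and there `g i j`
is `p ^ (k * (wᵢ - wⱼ))` times the entry of `d⁻¹ * g * d`. So if that entry lies in `p ^ r ℤ_p`,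
then `g i j` lies in `p ^ (r + k) ℤ_p`.
-/

section DiagonalConjugation

variable {ι K : Type*} [Fintype ι] [DecidableEq ι] [Field K]

theorem diagonal_inv_mul_mul_diagonal_apply {v : ι → K} (hv : ∀ i, v i ≠ 0) (g : Matrix ι ι K)
    (i j : ι) :
    ((Matrix.diagonal v)⁻¹ * g * Matrix.diagonal v) i j = (v i)⁻¹ * g i j * v j := by
  have hinv : (Matrix.diagonal v)⁻¹ = Matrix.diagonal v⁻¹ :=
    Matrix.inv_eq_left_inv <| by simp [hv]
  rw [hinv, Matrix.mul_diagonal, Matrix.diagonal_mul, Pi.inv_apply]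

theorem apply_eq_pow_mul_diagonal_pow_conj_apply {a : K} (ha : a ≠ 0) {e : ι → ℕ} {n : ℕ} {i j : ι}
    (hij : e i = e j + n) (g : Matrix ι ι K) :
    g i j = a ^ n *
      ((Matrix.diagonal fun l ↦ a ^ e l)⁻¹ * g * Matrix.diagonal fun l ↦ a ^ e l) i j := by
  rw [diagonal_inv_mul_mul_diagonal_apply fun l ↦ pow_ne_zero (e l) ha, hij]
  field_simp
  ring

end DiagonalConjugation

/-- The weights of the cocharacter `x ↦ diag(1, x, x³, x²)` of `GL₄`, whose value at `p ^ k` is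
`dMat p k`. -/
def dWeight : Fin 4 → ℕ := ![0, 1, 3, 2]

theorem mem_subBorelPos_iff {q : Fin 4 × Fin 4} :
    q ∈ subBorelPos ↔ dWeight q.2 < dWeight q.1 := by
  obtain ⟨i, j⟩ := q
  fin_cases i <;> fin_cases j <;> simp [subBorelPos, dWeight]

section Iwahori

variable {p : ℕ} [Fact p.Prime]

theorem dMat_eq_diagonal_pow (k : ℕ) :
    dMat p k = Matrix.diagonal fun i ↦ (p : ℚ_[p]) ^ (k * dWeight i) := by
  rw [dMat]
  congr 1
  ext i
  fin_cases i <;> simp [dWeight, mul_comm]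

theorem iwahori_antitone : Antitone (Iwahori p) := by
  rintro t u htu g ⟨hsymp, hint, hdvd⟩
  refine ⟨hsymp, hint, fun q hq ↦ ?_⟩
  obtain ⟨c, hc⟩ := hdvd q hq
  exact ⟨(p : ℤ_[p]) ^ (u - t) * c, by rwa [← mul_assoc, pow_mul_pow_sub _ htu]⟩

theorem mem_iwahori_add_of_dMat_conj_mem {r t k : ℕ} {g : Matrix (Fin 4) (Fin 4) ℚ_[p]}
    (hg : g ∈ Iwahori p t) (hconj : (dMat p k)⁻¹ * g * dMat p k ∈ Iwahori p r) :
    g ∈ Iwahori p (r + k) := by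
  refine ⟨hg.1, hg.2.1, fun q hq ↦ ?_⟩
  obtain ⟨b, hb⟩ : ∃ b, dWeight q.1 = dWeight q.2 + 1 + b :=
    Nat.exists_eq_add_of_le (mem_subBorelPos_iff.mp hq)
  have hp : (p : ℚ_[p]) ≠ 0 := Nat.cast_ne_zero.mpr (Fact.out : p.Prime).ne_zero
  have hexp : k * dWeight q.1 = k * dWeight q.2 + (k + k * b) := by rw [hb]; ring
  obtain ⟨c, hc⟩ := hconj.2.2 q hq
  refine ⟨(p : ℤ_[p]) ^ (k * b) * c, ?_⟩
  rw [apply_eq_pow_mul_diagonal_pow_conj_apply (e := fun i ↦ k * dWeight i) hp hexp g,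
    ← dMat_eq_diagonal_pow, ← hc]
  push_cast
  ring

end Iwahori

/-- The matrix computation underlying Hida's level-lowering Lemma 3.1: for
`1 ≤ r ≤ s`, `k = s − r` and `d = diag(1, p^k, p^{3k}, p^{2k})`, one has
`d⁻¹·I_s·d ∩ I_r = d⁻¹·I_r·d ∩ I_r` as subsets of `M₄(ℚ_p)`. -/
theorem stmt_3 (p : ℕ) [Fact p.Prime] (r s : ℕ) (hr : 1 ≤ r) (hrs : r ≤ s) :
    {m : Matrix (Fin 4) (Fin 4) ℚ_[p] |
        ∃ g ∈ Iwahori p s, m = (dMat p (s - r))⁻¹ * g * dMat p (s - r)} ∩ Iwahori p r =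
      {m : Matrix (Fin 4) (Fin 4) ℚ_[p] |
        ∃ g ∈ Iwahori p r, m = (dMat p (s - r))⁻¹ * g * dMat p (s - r)} ∩ Iwahori p r := by
  ext m
  constructor
  · rintro ⟨⟨g, hg, rfl⟩, hm⟩
    exact ⟨⟨g, iwahori_antitone hrs hg, rfl⟩, hm⟩
  · rintro ⟨⟨g, hg, rfl⟩, hm⟩
    have hgs : g ∈ Iwahori p (r + (s - r)) := mem_iwahori_add_of_dMat_conj_mem hg hm
    rw [Nat.add_sub_cancel' hrs] at hgs
    exact ⟨⟨g, hgs, rfl⟩, hm⟩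
end

section
/- Let p be a prime and r ≥ 1. Let I_r be the level-p^r Iwahori subgroup of Sp₄(ℤ_p) and let D = {diag(p^{a₁}, p^{a₂}, p^{b−a₁}, p^{b−a₂}) : a₁, a₂, b ∈ ℕ, a₁ ≤ a₂, 2a₂ ≤ b} (these are symplectic similitudes with multiplier p^b). Then for all d, d′ ∈ D one has the equality of subsets of M₄(ℚ_p): (I_r·d·I_r)·(I_r·d′·I_r) = I_r·(d·d′)·I_r. In particular the set Δ_r = I_r·D·I_r is closed under matrix multiplication (it is a sub-semigroup of GL₄(ℚ_p)). -/
open scoped Pointwise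

/-- The set of dominant diagonal symplectic similitudes
`diag(p^{a₁}, p^{a₂}, p^{b−a₁}, p^{b−a₂})` with `a₁ ≤ a₂` and `2a₂ ≤ b`. -/
def Dset (p : ℕ) [Fact p.Prime] : Set (Matrix (Fin 4) (Fin 4) ℚ_[p]) :=
  {d | ∃ a₁ a₂ b : ℕ, a₁ ≤ a₂ ∧ 2 * a₂ ≤ b ∧
    d = Matrix.diagonal
      ![(p : ℚ_[p]) ^ a₁, (p : ℚ_[p]) ^ a₂, (p : ℚ_[p]) ^ (b - a₁), (p : ℚ_[p]) ^ (b - a₂)]}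

/-!
If `I = N · B` is a factorization of a submonoid such that `d N ⊆ I d` and `B d' ⊆ d' I`, then
`d I d' = (d N) (B d') ⊆ I d d' I`, and double cosets multiply as claimed. For the Iwahori subgroup,
`N` and `B` are the lower and upper triangular parts with respect to the flag
`e₁, e₂, e₄, e₃`, and the factorization is Gaussian elimination: the pivots are units because they
are units modulo `pʳ`, which lies in the Jacobson radical of `ℤ_p`. A dominant `d` has entries that
increase in divisibility along this flag, so conjugation by it only multiplies the entries of `N`
and `B` by elements of `ℤ_p`.
-/

section DoubleCoset

variable {M : Type*} [Monoid M] {I : Submonoid M}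

theorem singleton_mul_mul_singleton_subset_of_factorization {N B : Set M} {d d' : M}
    (hI : (I : Set M) ⊆ N * B) (hN : {d} * N ⊆ (I : Set M) * {d})
    (hB : B * {d'} ⊆ {d'} * (I : Set M)) :
    {d} * (I : Set M) * {d'} ⊆ I * {d * d'} * I := by
  calc {d} * (I : Set M) * {d'} ⊆ {d} * (N * B) * {d'} := by gcongr
    _ = ({d} * N) * (B * {d'}) := by simp only [mul_assoc]
    _ ⊆ (I * {d}) * ({d'} * I) := by gcongr
    _ = I * {d * d'} * I := by simp only [← Set.singleton_mul_singleton, mul_assoc]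

theorem doubleCoset_mul_doubleCoset_of_subset {d d' : M}
    (h : {d} * (I : Set M) * {d'} ⊆ I * {d * d'} * I) :
    ((I : Set M) * {d} * I) * (I * {d'} * I) = I * {d * d'} * I := by
  have middle : ((I : Set M) * {d} * I) * (I * {d'} * I) = I * ({d} * I * {d'}) * I := by
    calc _ = (I : Set M) * {d} * (I * I) * {d'} * I := by simp only [mul_assoc]
      _ = _ := by simp only [Submonoid.coe_mul_self_eq, mul_assoc]
  rw [middle]
  apply Set.Subset.antisymm
  · calc (I : Set M) * ({d} * I * {d'}) * I ⊆ I * (I * {d * d'} * I) * I := by gcongr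
      _ = (I * I) * {d * d'} * (I * I) := by simp only [mul_assoc]
      _ = I * {d * d'} * I := by rw [Submonoid.coe_mul_self_eq]
  · have one_subset : (1 : Set M) ⊆ I := Set.one_subset.2 I.one_mem
    calc (I : Set M) * {d * d'} * I = I * ({d} * 1 * {d'}) * I := by simp
      _ ⊆ I * ({d} * I * {d'}) * I := by gcongr

theorem mem_mul_mul_iff_exists_singleton {A D B : Set M} {x : M} :
    x ∈ A * D * B ↔ ∃ d ∈ D, x ∈ A * {d} * B := by
  simp only [Set.mem_mul, Set.mem_singleton_iff]
  aesop

theorem mul_mem_mul_mul_of_doubleCoset_mul {D : Subsemigroup M}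
    (h : ∀ d ∈ D, ∀ d' ∈ D,
      ((I : Set M) * {d} * I) * (I * {d'} * I) = I * {d * d'} * I) {x y : M}
    (hx : x ∈ (I : Set M) * D * I) (hy : y ∈ (I : Set M) * D * I) :
    x * y ∈ (I : Set M) * D * I := by
  obtain ⟨d, hd, hx⟩ := mem_mul_mul_iff_exists_singleton.1 hx
  obtain ⟨d', hd', hy⟩ := mem_mul_mul_iff_exists_singleton.1 hy
  exact mem_mul_mul_iff_exists_singleton.2
    ⟨d * d', D.mul_mem hd hd', h d hd d' hd' ▸ Set.mul_mem_mul hx hy⟩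

end DoubleCoset

section Matrix

open Matrix OrderDual

variable {R n α : Type*} [CommRing R] [Fintype n] [DecidableEq n]

/-- The monoid of isometries of the bilinear form with Gram matrix `J`. -/
def isometrySubmonoid (J : Matrix n n R) : Submonoid (Matrix n n R) where
  carrier := {g | gᵀ * J * g = J}
  one_mem' := by simp
  mul_mem' {g h} hg hh := by
    calc (g * h)ᵀ * J * (g * h) = hᵀ * (gᵀ * J * g) * h := by
          simp only [transpose_mul, Matrix.mul_assoc]
      _ = J := by rw [hg, hh]

theorem mem_isometrySubmonoid {J g : Matrix n n R} :
    g ∈ isometrySubmonoid J ↔ gᵀ * J * g = J := Iff.rfl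

theorem mapMatrix_mem_isometrySubmonoid_iff {S : Type*} [CommRing S] {φ : R →+* S}
    (hφ : Function.Injective φ) {J g : Matrix n n R} :
    φ.mapMatrix g ∈ isometrySubmonoid (φ.mapMatrix J) ↔ g ∈ isometrySubmonoid J := by
  simp only [mem_isometrySubmonoid, RingHom.mapMatrix_apply, ← transpose_map, ← Matrix.map_mul,
    (map_injective hφ).eq_iff]

theorem isUnit_det_of_mem_isometrySubmonoid {J g : Matrix n n R} (hJ : IsUnit J.det)
    (hg : g ∈ isometrySubmonoid J) : IsUnit g.det := by
  have det_eq : g.det * J.det * g.det = J.det := by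
    simpa using congr_arg det (mem_isometrySubmonoid.1 hg)
  exact .of_mul_eq_one g.det (hJ.mul_left_cancel (by linear_combination det_eq))

theorem isUnit_apply_self_of_blockTriangular [LinearOrder α] {b : n → α}
    (hb : Function.Injective b) {A : Matrix n n R} (hA : A.BlockTriangular b)
    (hdet : IsUnit A.det) (i : n) : IsUnit (A i i) := by
  let : LinearOrder n := LinearOrder.lift' b hb
  have det_eq : A.det = ∏ i, A i i := det_of_isUpperTriangular hA
  rw [det_eq] at hdet
  exact IsUnit.prod_univ_iff.1 hdet i

theorem mem_isometrySubmonoid_of_mul_eq_mul {J d g h : Matrix n n R} {c : R} (hc : IsRegular c)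
    (hd : dᵀ * J * d = c • J) (hg : g ∈ isometrySubmonoid J) (hgh : g * d = d * h) :
    h ∈ isometrySubmonoid J := by
  have scaled : c • (hᵀ * J * h) = c • J := by
    calc c • (hᵀ * J * h) = hᵀ * (dᵀ * J * d) * h := by simp [hd]
      _ = (d * h)ᵀ * J * (d * h) := by simp only [transpose_mul, Matrix.mul_assoc]
      _ = dᵀ * (gᵀ * J * g) * d := by simp only [← hgh, transpose_mul, Matrix.mul_assoc]
      _ = c • J := by rw [mem_isometrySubmonoid.1 hg, hd]
  ext i j
  exact hc.left (congr_fun₂ scaled i j)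

theorem mem_isometrySubmonoid_of_diagonal_mul_eq_mul {J g h : Matrix n n R} {t : n → R} {c : R}
    (ht : ∀ i, IsRegular (t i)) (hd : (diagonal t)ᵀ * J * diagonal t = c • J)
    (hg : g ∈ isometrySubmonoid J) (hgh : diagonal t * g = h * diagonal t) :
    h ∈ isometrySubmonoid J := by
  have conjugated : diagonal t * (hᵀ * J * h) * diagonal t = diagonal t * J * diagonal t := by
    calc diagonal t * (hᵀ * J * h) * diagonal t
        = (h * diagonal t)ᵀ * J * (h * diagonal t) := by
          simp only [transpose_mul, diagonal_transpose, Matrix.mul_assoc]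
      _ = gᵀ * ((diagonal t)ᵀ * J * diagonal t) * g := by
          simp only [← hgh, transpose_mul, Matrix.mul_assoc]
      _ = c • (gᵀ * J * g) := by rw [hd, Matrix.mul_smul, Matrix.smul_mul]
      _ = diagonal t * J * diagonal t := by
          rw [mem_isometrySubmonoid.1 hg, ← hd, diagonal_transpose]
  ext i j
  have entry := congr_fun₂ conjugated i j
  rw [mul_diagonal, mul_diagonal, diagonal_mul, diagonal_mul] at entry
  exact (ht i).left ((ht j).right entry)

theorem exists_diagonal_mul_eq_hadamard_mul_diagonal [LinearOrder α] {b : n → α} {t : n → R}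
    (ht : ∀ i j, b i ≤ b j → t i ∣ t j) {A : Matrix n n R}
    (hA : A.BlockTriangular (toDual ∘ b)) :
    ∃ c : Matrix n n R, diagonal t * A = (c ⊙ A) * diagonal t := by
  have quotients (i j : n) : ∃ c, b j ≤ b i → t i = t j * c := by
    by_cases hij : b j ≤ b i
    · exact (ht j i hij).imp fun _ hc _ => hc
    · exact ⟨0, fun h => absurd h hij⟩
  choose c hc using quotients
  refine ⟨of c, ?_⟩
  ext i j
  rw [diagonal_mul, mul_diagonal, hadamard_apply, of_apply]
  obtain hij | hij := le_or_gt (b j) (b i)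
  · rw [hc i j hij]; ring
  · have zero_above : A i j = 0 := hA hij
    simp [zero_above]

theorem exists_mul_diagonal_eq_diagonal_mul_hadamard [LinearOrder α] {b : n → α} {t : n → R}
    (ht : ∀ i j, b i ≤ b j → t i ∣ t j) {A : Matrix n n R} (hA : A.BlockTriangular b) :
    ∃ c : Matrix n n R, A * diagonal t = diagonal t * (c ⊙ A) := by
  obtain ⟨c, hc⟩ := exists_diagonal_mul_eq_hadamard_mul_diagonal ht hA.transpose
  refine ⟨cᵀ, ?_⟩
  simpa [transpose_mul, transpose_hadamard] using congr_arg transpose hc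

end Matrix

section SymplecticIwahori

open Matrix OrderDual

variable {R S : Type*} [CommRing R] [CommRing S] {𝔞 : Ideal R}

theorem mapMatrix_J4 (φ : R →+* S) : φ.mapMatrix (J4 R) = J4 S := by
  ext i j
  fin_cases i <;> fin_cases j <;> simp [J4]

/-- The position of each basis vector in the complete flag spanned by `e₁, e₂, e₄, e₃`, which the
Borel subgroup stabilizes: its elements are the symplectic matrices that are upper triangular for
this order. -/
def flagOrder : Fin 4 → Fin 4 := ![0, 1, 3, 2]

theorem mem_subBorelPos_iff_s6 {i j : Fin 4} : (i, j) ∈ subBorelPos ↔ flagOrder j < flagOrder i := by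
  fin_cases i <;> fin_cases j <;> simp [subBorelPos, flagOrder]

/-- The Iwahori submonoid of level `𝔞` of `Sp₄(R)`: the symplectic matrices whose reduction modulo
`𝔞` lies in the Borel subgroup. -/
def symplecticIwahori (𝔞 : Ideal R) : Submonoid (Matrix (Fin 4) (Fin 4) R) :=
  isometrySubmonoid (J4 R) ⊓
    (blockTriangularSubsemiring (R ⧸ 𝔞) flagOrder).toSubmonoid.comap
      (Ideal.Quotient.mk 𝔞).mapMatrix

theorem mem_symplecticIwahori {g : Matrix (Fin 4) (Fin 4) R} :
    g ∈ symplecticIwahori 𝔞 ↔ g ∈ isometrySubmonoid (J4 R) ∧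
      ∀ ⦃i j⦄, flagOrder j < flagOrder i → g i j ∈ 𝔞 := by
  simp [symplecticIwahori, BlockTriangular, Ideal.Quotient.eq_zero_iff_mem]

theorem hadamard_mem_symplecticIwahori {c g : Matrix (Fin 4) (Fin 4) R}
    (hg : g ∈ symplecticIwahori 𝔞) (hc : c ⊙ g ∈ isometrySubmonoid (J4 R)) :
    c ⊙ g ∈ symplecticIwahori 𝔞 :=
  mem_symplecticIwahori.2
    ⟨hc, fun i j hij => 𝔞.mul_mem_left (c i j) ((mem_symplecticIwahori.1 hg).2 hij)⟩

theorem symplectic_pairing_col_col {g : Matrix (Fin 4) (Fin 4) R}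
    (hg : g ∈ isometrySubmonoid (J4 R)) (i j : Fin 4) :
    g 0 i * g 2 j + g 1 i * g 3 j - g 2 i * g 0 j - g 3 i * g 1 j = J4 R i j := by
  rw [← mem_isometrySubmonoid.1 hg]
  simp [Matrix.mul_apply, Fin.sum_univ_four, J4]
  ring

theorem isUnit_det_J4 : IsUnit (J4 R).det := by
  simp [J4, det_succ_row_zero, Fin.sum_univ_succ, Fin.succAbove]

theorem isUnit_apply_self_of_mem_symplecticIwahori (h𝔞 : 𝔞 ≤ Ideal.jacobson ⊥)
    {g : Matrix (Fin 4) (Fin 4) R} (hg : g ∈ symplecticIwahori 𝔞) (i : Fin 4) :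
    IsUnit (g i i) := by
  have isUnit_det : IsUnit ((Ideal.Quotient.mk 𝔞).mapMatrix g).det := by
    rw [← RingHom.map_det]
    exact (isUnit_det_of_mem_isometrySubmonoid isUnit_det_J4 hg.1).map _
  have : IsLocalHom (Ideal.Quotient.mk 𝔞) := isLocalHom_of_le_jacobson_bot 𝔞 h𝔞
  exact isUnit_of_map_unit (Ideal.Quotient.mk 𝔞) _
    (isUnit_apply_self_of_blockTriangular (by decide : flagOrder.Injective) hg.2 isUnit_det i)

/-- The lower triangular part of the Iwahori submonoid of level `𝔞`. -/
def lowerIwahori (𝔞 : Ideal R) : Submonoid (Matrix (Fin 4) (Fin 4) R) :=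
  symplecticIwahori 𝔞 ⊓ (blockTriangularSubsemiring R (toDual ∘ flagOrder)).toSubmonoid

theorem mem_lowerIwahori {g : Matrix (Fin 4) (Fin 4) R} :
    g ∈ lowerIwahori 𝔞 ↔ g ∈ symplecticIwahori 𝔞 ∧ g.BlockTriangular (toDual ∘ flagOrder) :=
  Iff.rfl

/-- The upper triangular part of the Iwahori submonoid of level `𝔞`. -/
def upperIwahori (𝔞 : Ideal R) : Submonoid (Matrix (Fin 4) (Fin 4) R) :=
  symplecticIwahori 𝔞 ⊓ (blockTriangularSubsemiring R flagOrder).toSubmonoid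

theorem mem_upperIwahori {g : Matrix (Fin 4) (Fin 4) R} :
    g ∈ upperIwahori 𝔞 ↔ g ∈ symplecticIwahori 𝔞 ∧ g.BlockTriangular flagOrder :=
  Iff.rfl

/-- The lower unipotent symplectic matrices with first column `(1, x, y, z)` that fix `e₂` modulo
`e₃`; they form the unipotent radical (a Heisenberg group) of the lower Klingen parabolic. -/
def lowerHeisenberg (x y z : R) : Matrix (Fin 4) (Fin 4) R :=
  !![1, 0, 0, 0;
     x, 1, 0, 0;
     y, z, 1, -x;
     z, 0, 0, 1]

/-- The root subgroup of `Sp₄` for the negative of the simple long root. -/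
def lowerLongRoot (w : R) : Matrix (Fin 4) (Fin 4) R :=
  !![1, 0, 0, 0;
     0, 1, 0, 0;
     0, 0, 1, 0;
     0, w, 0, 1]

theorem lowerHeisenberg_mul_neg (x y z : R) :
    lowerHeisenberg x y z * lowerHeisenberg (-x) (-y) (-z) = 1 := by
  ext i j
  fin_cases i <;> fin_cases j <;> simp [lowerHeisenberg, Matrix.mul_apply, Fin.sum_univ_four]
  ring

theorem lowerLongRoot_mul_neg (w : R) : lowerLongRoot w * lowerLongRoot (-w) = 1 := by
  ext i j
  fin_cases i <;> fin_cases j <;> simp [lowerLongRoot, Matrix.mul_apply, Fin.sum_univ_four]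

theorem lowerHeisenberg_mem_lowerIwahori {x y z : R} (hx : x ∈ 𝔞) (hy : y ∈ 𝔞) (hz : z ∈ 𝔞) :
    lowerHeisenberg x y z ∈ lowerIwahori 𝔞 := by
  refine mem_lowerIwahori.2 ⟨mem_symplecticIwahori.2 ⟨mem_isometrySubmonoid.2 ?_, ?_⟩, ?_⟩
  · ext i j
    fin_cases i <;> fin_cases j <;>
      simp [lowerHeisenberg, J4, Matrix.mul_apply, Fin.sum_univ_four]
    ring
  · intro i j
    fin_cases i <;> fin_cases j <;> simp [lowerHeisenberg, flagOrder, hx, hy, hz]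
  · intro i j (hij : flagOrder i < flagOrder j)
    fin_cases i <;> fin_cases j <;> simp_all [lowerHeisenberg, flagOrder]

theorem lowerLongRoot_mem_lowerIwahori {w : R} (hw : w ∈ 𝔞) :
    lowerLongRoot w ∈ lowerIwahori 𝔞 := by
  refine mem_lowerIwahori.2 ⟨mem_symplecticIwahori.2 ⟨mem_isometrySubmonoid.2 ?_, ?_⟩, ?_⟩
  · ext i j
    fin_cases i <;> fin_cases j <;>
      simp [lowerLongRoot, J4, Matrix.mul_apply, Fin.sum_univ_four]
  · intro i j
    fin_cases i <;> fin_cases j <;> simp [lowerLongRoot, flagOrder, hw]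
  · intro i j (hij : flagOrder i < flagOrder j)
    fin_cases i <;> fin_cases j <;> simp_all [lowerLongRoot, flagOrder]

theorem exists_mul_eq_and_firstColumn_eq_zero (h𝔞 : 𝔞 ≤ Ideal.jacobson ⊥)
    {g : Matrix (Fin 4) (Fin 4) R} (hg : g ∈ symplecticIwahori 𝔞) :
    ∃ l ∈ lowerIwahori 𝔞, ∃ h ∈ symplecticIwahori 𝔞,
      l * h = g ∧ h 1 0 = 0 ∧ h 2 0 = 0 ∧ h 3 0 = 0 := by
  obtain ⟨v, pivot⟩ :=
    (isUnit_apply_self_of_mem_symplecticIwahori h𝔞 hg 0).exists_right_inv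
  have scaled_mem {i : Fin 4} (hi : flagOrder 0 < flagOrder i) : g i 0 * v ∈ 𝔞 :=
    𝔞.mul_mem_right v ((mem_symplecticIwahori.1 hg).2 hi)
  have hx : g 1 0 * v ∈ 𝔞 := scaled_mem (by decide)
  have hy : g 2 0 * v ∈ 𝔞 := scaled_mem (by decide)
  have hz : g 3 0 * v ∈ 𝔞 := scaled_mem (by decide)
  refine ⟨_, lowerHeisenberg_mem_lowerIwahori hx hy hz, lowerHeisenberg _ _ _ * g,
    mul_mem (lowerHeisenberg_mem_lowerIwahori (neg_mem hx) (neg_mem hy) (neg_mem hz)).1 hg,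
    by rw [← Matrix.mul_assoc, lowerHeisenberg_mul_neg, Matrix.one_mul], ?_, ?_, ?_⟩ <;>
    simp only [lowerHeisenberg, Matrix.mul_apply, Fin.sum_univ_four, of_apply, cons_val]
  · linear_combination -g 1 0 * pivot
  · linear_combination -g 2 0 * pivot
  · linear_combination -g 3 0 * pivot

theorem exists_mul_eq_and_blockTriangular_of_firstColumn_eq_zero (h𝔞 : 𝔞 ≤ Ideal.jacobson ⊥)
    {h : Matrix (Fin 4) (Fin 4) R} (hh : h ∈ symplecticIwahori 𝔞)
    (h10 : h 1 0 = 0) (h20 : h 2 0 = 0) (h30 : h 3 0 = 0) :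
    ∃ l ∈ lowerIwahori 𝔞, ∃ k ∈ upperIwahori 𝔞, l * k = h := by
  obtain ⟨isometry, triangular⟩ := mem_symplecticIwahori.1 hh
  have pivot₀ := isUnit_apply_self_of_mem_symplecticIwahori h𝔞 hh 0
  obtain ⟨v, pivot₁⟩ :=
    (isUnit_apply_self_of_mem_symplecticIwahori h𝔞 hh 1).exists_right_inv
  -- The first column is a unit multiple of `e₁`, and the second and fourth are orthogonal to it.
  have h21 : h 2 1 = 0 := by
    simpa [h10, h20, h30, J4, pivot₀.mul_right_eq_zero] using
      symplectic_pairing_col_col isometry 0 1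
  have h23 : h 2 3 = 0 := by
    simpa [h10, h20, h30, J4, pivot₀.mul_right_eq_zero] using
      symplectic_pairing_col_col isometry 0 3
  have hw : h 3 1 * v ∈ 𝔞 := 𝔞.mul_mem_right v (triangular (by decide))
  refine ⟨_, lowerLongRoot_mem_lowerIwahori hw, lowerLongRoot (-(h 3 1 * v)) * h,
    mem_upperIwahori.2 ⟨mul_mem (lowerLongRoot_mem_lowerIwahori (neg_mem hw)).1 hh, ?_⟩,
    by rw [← Matrix.mul_assoc, lowerLongRoot_mul_neg, Matrix.one_mul]⟩
  have k31 : -(h 3 1 * v * h 1 1) + h 3 1 = 0 := by linear_combination -h 3 1 * pivot₁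
  intro i j
  fin_cases i <;> fin_cases j <;>
    simp [lowerLongRoot, flagOrder, Matrix.mul_apply, Fin.sum_univ_four, h10, h20, h21, h23, h30,
      k31]

theorem symplecticIwahori_subset_lowerIwahori_mul_upperIwahori (h𝔞 : 𝔞 ≤ Ideal.jacobson ⊥) :
    (symplecticIwahori 𝔞 : Set (Matrix (Fin 4) (Fin 4) R)) ⊆ lowerIwahori 𝔞 * upperIwahori 𝔞 := by
  intro g hg
  obtain ⟨l, hl, h, hh, rfl, h10, h20, h30⟩ := exists_mul_eq_and_firstColumn_eq_zero h𝔞 hg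
  obtain ⟨l', hl', k, hk, rfl⟩ :=
    exists_mul_eq_and_blockTriangular_of_firstColumn_eq_zero h𝔞 hh h10 h20 h30
  exact ⟨l * l', mul_mem hl hl', k, hk, Matrix.mul_assoc l l' k⟩

/-- `diagonal t` is a dominant symplectic similitude, that is, `t` increases in divisibility along
the flag of `flagOrder`. Its entries are required to be regular instead of invertible, so that
`diag(p^{a₁}, p^{a₂}, p^{b−a₁}, p^{b−a₂})` is one already over `ℤ_p`. -/
structure IsDominantSimilitude (t : Fin 4 → R) : Prop where
  isRegular : ∀ i, IsRegular (t i)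
  dvd_of_le : ∀ i j, flagOrder i ≤ flagOrder j → t i ∣ t j
  multiplier_eq : t 0 * t 2 = t 1 * t 3

namespace IsDominantSimilitude

variable {t t' : Fin 4 → R}

theorem transpose_mul_J4_mul (ht : IsDominantSimilitude t) :
    (diagonal t)ᵀ * J4 R * diagonal t = (t 0 * t 2) • J4 R := by
  have multiplier_eq := ht.multiplier_eq
  ext i j
  fin_cases i <;> fin_cases j <;> simp [J4] <;> grind

theorem singleton_mul_lowerIwahori_subset (ht : IsDominantSimilitude t) :
    {diagonal t} * (lowerIwahori 𝔞 : Set (Matrix (Fin 4) (Fin 4) R)) ⊆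
      symplecticIwahori 𝔞 * {diagonal t} := by
  rintro _ ⟨_, rfl, g, hg, rfl⟩
  obtain ⟨hg, lower⟩ := mem_lowerIwahori.1 hg
  obtain ⟨c, hc⟩ := exists_diagonal_mul_eq_hadamard_mul_diagonal ht.dvd_of_le lower
  have isometry := mem_isometrySubmonoid_of_diagonal_mul_eq_mul ht.isRegular
    ht.transpose_mul_J4_mul (mem_symplecticIwahori.1 hg).1 hc
  exact ⟨c ⊙ g, hadamard_mem_symplecticIwahori hg isometry, _, rfl, hc.symm⟩

theorem upperIwahori_mul_singleton_subset (ht : IsDominantSimilitude t) :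
    (upperIwahori 𝔞 : Set (Matrix (Fin 4) (Fin 4) R)) * {diagonal t} ⊆
      {diagonal t} * symplecticIwahori 𝔞 := by
  rintro _ ⟨g, hg, _, rfl, rfl⟩
  obtain ⟨hg, upper⟩ := mem_upperIwahori.1 hg
  obtain ⟨c, hc⟩ := exists_mul_diagonal_eq_diagonal_mul_hadamard ht.dvd_of_le upper
  have isometry := mem_isometrySubmonoid_of_mul_eq_mul ((ht.isRegular 0).mul (ht.isRegular 2))
    ht.transpose_mul_J4_mul (mem_symplecticIwahori.1 hg).1 hc
  exact ⟨_, rfl, c ⊙ g, hadamard_mem_symplecticIwahori hg isometry, hc.symm⟩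

theorem singleton_mul_symplecticIwahori_mul_singleton_subset (h𝔞 : 𝔞 ≤ Ideal.jacobson ⊥)
    (ht : IsDominantSimilitude t) (ht' : IsDominantSimilitude t') :
    {diagonal t} * (symplecticIwahori 𝔞 : Set (Matrix (Fin 4) (Fin 4) R)) * {diagonal t'} ⊆
      symplecticIwahori 𝔞 * {diagonal t * diagonal t'} * symplecticIwahori 𝔞 :=
  singleton_mul_mul_singleton_subset_of_factorization
    (symplecticIwahori_subset_lowerIwahori_mul_upperIwahori h𝔞)
    ht.singleton_mul_lowerIwahori_subset ht'.upperIwahori_mul_singleton_subset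

end IsDominantSimilitude

/-- The Iwahori submonoid of level `𝔞` of `Sp₄(R)`, viewed in `M₄(S)` along `φ : R → S`. -/
def mappedIwahori (φ : R →+* S) (𝔞 : Ideal R) : Submonoid (Matrix (Fin 4) (Fin 4) S) :=
  (symplecticIwahori 𝔞).map φ.mapMatrix

theorem singleton_mul_mappedIwahori_mul_singleton_subset (φ : R →+* S)
    (h𝔞 : 𝔞 ≤ Ideal.jacobson ⊥) {t t' : Fin 4 → R} (ht : IsDominantSimilitude t)
    (ht' : IsDominantSimilitude t') :
    {φ.mapMatrix (diagonal t)} * (mappedIwahori φ 𝔞 : Set (Matrix (Fin 4) (Fin 4) S)) *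
        {φ.mapMatrix (diagonal t')} ⊆
      mappedIwahori φ 𝔞 * {φ.mapMatrix (diagonal t) * φ.mapMatrix (diagonal t')} *
        mappedIwahori φ 𝔞 := by
  have image := Set.image_mono (f := φ.mapMatrix)
    (ht.singleton_mul_symplecticIwahori_mul_singleton_subset h𝔞 ht')
  simpa only [Set.image_mul, Set.image_singleton, map_mul, mappedIwahori, Submonoid.coe_map]
    using! image

theorem stmt_6_general (φ : R →+* S) (h𝔞 : 𝔞 ≤ Ideal.jacobson ⊥)
    (D : Subsemigroup (Matrix (Fin 4) (Fin 4) S))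
    (hD : ∀ d ∈ D, ∃ t, IsDominantSimilitude t ∧ φ.mapMatrix (diagonal t) = d) :
    (∀ d ∈ D, ∀ d' ∈ D,
      (mappedIwahori φ 𝔞 * ({d} : Set (Matrix (Fin 4) (Fin 4) S)) * mappedIwahori φ 𝔞) *
          (mappedIwahori φ 𝔞 * ({d'} : Set (Matrix (Fin 4) (Fin 4) S)) * mappedIwahori φ 𝔞) =
        mappedIwahori φ 𝔞 * ({d * d'} : Set (Matrix (Fin 4) (Fin 4) S)) * mappedIwahori φ 𝔞) ∧
    ∀ x ∈ (mappedIwahori φ 𝔞 * D * mappedIwahori φ 𝔞 : Set (Matrix (Fin 4) (Fin 4) S)),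
      ∀ y ∈ (mappedIwahori φ 𝔞 * D * mappedIwahori φ 𝔞 : Set (Matrix (Fin 4) (Fin 4) S)),
        x * y ∈ (mappedIwahori φ 𝔞 * D * mappedIwahori φ 𝔞 : Set (Matrix (Fin 4) (Fin 4) S)) := by
  rw [and_iff_left_of_imp fun h x hx y hy => mul_mem_mul_mul_of_doubleCoset_mul h hx hy]
  intro d hd d' hd'
  obtain ⟨t, ht, rfl⟩ := hD d hd
  obtain ⟨t', ht', rfl⟩ := hD d' hd'
  exact doubleCoset_mul_doubleCoset_of_subset
    (singleton_mul_mappedIwahori_mul_singleton_subset φ h𝔞 ht ht')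

end SymplecticIwahori

section Padic

open Matrix

variable (p : ℕ) [Fact p.Prime]

theorem span_p_pow_le_jacobson_bot {r : ℕ} (hr : 1 ≤ r) :
    Ideal.span {(p : ℤ_[p]) ^ r} ≤ Ideal.jacobson ⊥ := by
  rw [IsLocalRing.jacobson_eq_maximalIdeal ⊥ bot_ne_top, PadicInt.maximalIdeal_eq_span_p,
    Ideal.span_singleton_le_span_singleton]
  exact dvd_pow_self _ (Nat.one_le_iff_ne_zero.1 hr)

theorem mem_mappedIwahori_of_mem_Iwahori {r : ℕ} {g : Matrix (Fin 4) (Fin 4) ℚ_[p]}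
    (hg : g ∈ Iwahori p r) :
    g ∈ mappedIwahori PadicInt.Coe.ringHom (Ideal.span {(p : ℤ_[p]) ^ r}) := by
  obtain ⟨isometry, integral, subBorel⟩ := hg
  choose A hA using integral
  obtain rfl : PadicInt.Coe.ringHom.mapMatrix (of A) = g := Matrix.ext hA
  refine ⟨of A, mem_symplecticIwahori.2 ⟨?_, fun i j hij => ?_⟩, rfl⟩
  · rwa [← mapMatrix_mem_isometrySubmonoid_iff (φ := PadicInt.Coe.ringHom) Subtype.coe_injective,
      mapMatrix_J4]
  · obtain ⟨c, hc⟩ := subBorel (i, j) (mem_subBorelPos_iff_s6.2 hij)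
    exact Ideal.mem_span_singleton.2 ⟨c, Subtype.coe_injective hc.symm⟩

theorem mem_Iwahori_of_mem_mappedIwahori {r : ℕ} {g : Matrix (Fin 4) (Fin 4) ℚ_[p]}
    (hg : g ∈ mappedIwahori PadicInt.Coe.ringHom (Ideal.span {(p : ℤ_[p]) ^ r})) :
    g ∈ Iwahori p r := by
  obtain ⟨A, hA, rfl⟩ := hg
  obtain ⟨isometry, triangular⟩ := mem_symplecticIwahori.1 hA
  refine ⟨?_, fun i j => ⟨A i j, rfl⟩, fun ⟨i, j⟩ hij => ?_⟩
  · rwa [← mapMatrix_mem_isometrySubmonoid_iff (φ := PadicInt.Coe.ringHom) Subtype.coe_injective,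
      mapMatrix_J4] at isometry
  · obtain ⟨c, hc⟩ := Ideal.mem_span_singleton.1 (triangular (mem_subBorelPos_iff_s6.1 hij))
    exact ⟨c, congr_arg Subtype.val hc.symm⟩

theorem Iwahori_eq_mappedIwahori (r : ℕ) :
    Iwahori p r = mappedIwahori PadicInt.Coe.ringHom (Ideal.span {(p : ℤ_[p]) ^ r}) :=
  Set.ext fun _ => ⟨mem_mappedIwahori_of_mem_Iwahori p, mem_Iwahori_of_mem_mappedIwahori p⟩

/-- `Dset p` as a multiplicatively closed subset of `M₄(ℚ_p)`. -/
def dominantSubsemigroup : Subsemigroup (Matrix (Fin 4) (Fin 4) ℚ_[p]) where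
  carrier := Dset p
  mul_mem' := by
    rintro _ _ ⟨a₁, a₂, b, h₁, h₂, rfl⟩ ⟨a₁', a₂', b', h₁', h₂', rfl⟩
    refine ⟨a₁ + a₁', a₂ + a₂', b + b', by omega, by omega, ?_⟩
    rw [show b + b' - (a₁ + a₁') = (b - a₁) + (b' - a₁') by omega,
      show b + b' - (a₂ + a₂') = (b - a₂) + (b' - a₂') by omega, diagonal_mul_diagonal]
    congr 1
    ext i
    fin_cases i <;> simp [pow_add]

theorem isDominantSimilitude_pow {R : Type*} [CommRing R] {ϖ : R} (hϖ : IsRegular ϖ)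
    {a₁ a₂ b : ℕ} (h₁ : a₁ ≤ a₂) (h₂ : 2 * a₂ ≤ b) :
    IsDominantSimilitude ![ϖ ^ a₁, ϖ ^ a₂, ϖ ^ (b - a₁), ϖ ^ (b - a₂)] where
  isRegular i := by fin_cases i <;> exact hϖ.pow _
  dvd_of_le i j := by
    fin_cases i <;> fin_cases j <;> first
      | exact fun _ => pow_dvd_pow ϖ (by omega)
      | exact fun h => absurd h (by decide)
  multiplier_eq := by
    simp only [cons_val, ← pow_add]
    congr 1
    omega

theorem exists_isDominantSimilitude_of_mem_dominantSubsemigroup :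
    ∀ d ∈ dominantSubsemigroup p, ∃ t : Fin 4 → ℤ_[p],
      IsDominantSimilitude t ∧ PadicInt.Coe.ringHom.mapMatrix (diagonal t) = d := by
  rintro _ ⟨a₁, a₂, b, h₁, h₂, rfl⟩
  refine ⟨_, isDominantSimilitude_pow (.of_ne_zero PadicInt.prime_p.ne_zero) h₁ h₂, ?_⟩
  ext i j
  fin_cases i <;> fin_cases j <;> simp

end Padic

/-- Multiplicativity of Iwahori double cosets (Proposition 2.1):
`(I_r·d·I_r)·(I_r·d′·I_r) = I_r·(d·d′)·I_r` for `d, d′ ∈ D`; in particular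
`Δ_r = I_r·D·I_r` is closed under matrix multiplication. -/
theorem stmt_6 (p : ℕ) [Fact p.Prime] (r : ℕ) (hr : 1 ≤ r) :
    (∀ d ∈ Dset p, ∀ d' ∈ Dset p,
      (Iwahori p r * ({d} : Set (Matrix (Fin 4) (Fin 4) ℚ_[p])) * Iwahori p r) *
          (Iwahori p r * ({d'} : Set (Matrix (Fin 4) (Fin 4) ℚ_[p])) * Iwahori p r) =
        Iwahori p r * ({d * d'} : Set (Matrix (Fin 4) (Fin 4) ℚ_[p])) * Iwahori p r) ∧
    ∀ x ∈ Iwahori p r * Dset p * Iwahori p r, ∀ y ∈ Iwahori p r * Dset p * Iwahori p r,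
      x * y ∈ Iwahori p r * Dset p * Iwahori p r := by
  rw [Iwahori_eq_mappedIwahori]
  exact stmt_6_general _ (span_p_pow_le_jacobson_bot p hr) (dominantSubsemigroup p)
    (exists_isDominantSimilitude_of_mem_dominantSubsemigroup p)
end
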